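/- Let n ≥ 2. Given n+3 points of ℙⁿ(ℂ) in linearly general position, there exists exactly one rational normal curve in ℙⁿ (as a subset of ℙⁿ) passing through all n+3 points. -/

import Mathlib

noncomputable section

/-- Projective space `ℙⁿ(ℂ)`, the projectivization of `ℂ^{n+1}`. -/
abbrev PP (k : ℕ) := Projectivization ℂ (Fin (k + 1) → ℂ)

/-- The vector of the monomials `s^k t^(n-k)`, used to parametrize rational normal curves. -/
def veron (n : ℕ) (v : Fin 2 → ℂ) : Fin (n + 1) → ℂ :=
  fun k => v 0 ^ (k : ℕ) * v 1 ^ (n - (k : ℕ))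

/-- `C ⊆ ℙⁿ` is a rational normal curve if it is the image of `[s:t] ↦ [F₀(s,t):⋯:Fₙ(s,t)]`
for a basis `F₀,…,Fₙ` of the degree-`n` binary forms; such a basis is encoded by an
invertible matrix of coefficients applied to the monomial vector `veron`. -/
def IsRNC (n : ℕ) (C : Set (PP n)) : Prop :=
  ∃ M : Matrix (Fin (n + 1)) (Fin (n + 1)) ℂ, IsUnit M.det ∧
    C = {P : PP n | ∃ v : Fin 2 → ℂ, v ≠ 0 ∧ ∃ c : ℂ, c ≠ 0 ∧
      P.rep = c • M.mulVec (veron n v)}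

/-- Points of `ℙᵏ` are in linearly general position if every subset of them of size at
most `k+1` has linearly independent representative vectors. -/
def InGenPos {k m : ℕ} (Q : Fin m → PP k) : Prop :=
  ∀ S : Finset (Fin m), S.card ≤ k + 1 →
    LinearIndependent ℂ fun i : S => (Q i).rep


/-- Coordinates of the explicit rational normal curve. -/
def phi0 {n : ℕ} (a b : Fin (n + 1) → ℂ) (v : Fin 2 → ℂ) : Fin (n + 1) → ℂ :=
  fun i => a i * b i * ∏ j ∈ Finset.univ.erase i, (b j * v 0 + a j * v 1)

lemma form_exists {ι : Type*} [DecidableEq ι] (d : ℕ) (s : Finset ι) (hs : s.card = d)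
    (α β : ι → ℂ) :
    ∃ m : Fin (d + 1) → ℂ, ∀ v : Fin 2 → ℂ,
      ∏ j ∈ s, (α j * v 0 + β j * v 1) = ∑ k, m k * veron d v k := by
  refine ⟨fun k => ∑ t ∈ s.powersetCard k, (∏ i ∈ t, α i) * ∏ i ∈ s \ t, β i, fun v => ?_⟩
  rw [Finset.prod_add, Finset.sum_powerset, hs, Finset.sum_range]
  refine Finset.sum_congr rfl fun k _ => ?_
  rw [Finset.sum_mul]
  refine Finset.sum_congr rfl fun t ht => ?_
  rw [Finset.mem_powersetCard] at ht
  have h2 : (s \ t).card = d - k := by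
    rw [Finset.card_sdiff_of_subset ht.1, hs, ht.2]
  rw [Finset.prod_mul_distrib, Finset.prod_mul_distrib, Finset.prod_const, Finset.prod_const, h2,
    ht.2, veron]
  ring

lemma form_unique {n : ℕ} (p : Fin (n + 1) → Fin 2 → ℂ)
    (hp : ∀ i j, i ≠ j → p i 0 * p j 1 - p j 0 * p i 1 ≠ 0)
    (m m' : Fin (n + 1) → ℂ)
    (h : ∀ i, ∑ k, m k * veron n (p i) k = ∑ k, m' k * veron n (p i) k) : m = m' := by
  have hdet : (Matrix.projVandermonde (fun i => p i 0) (fun i => p i 1)).det ≠ 0 := by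
    rw [Matrix.det_projVandermonde]
    refine Finset.prod_ne_zero_iff.2 fun i _ => Finset.prod_ne_zero_iff.2 fun j hj => ?_
    exact hp j i (Finset.mem_Ioi.1 hj).ne'
  rw [← sub_eq_zero]
  refine Matrix.eq_zero_of_mulVec_eq_zero hdet ?_
  ext i
  have := h i
  rw [← sub_eq_zero, ← Finset.sum_sub_distrib] at this
  rw [Pi.zero_apply, ← this, Matrix.mulVec, dotProduct]
  refine Finset.sum_congr rfl fun k _ => ?_
  rw [Matrix.projVandermonde_apply, veron, Fin.val_rev]
  have : n + 1 - (↑k + 1) = n - (k : ℕ) := by omega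
  rw [this, Pi.sub_apply]
  ring

lemma phi0_root {n : ℕ} (a b : Fin (n + 1) → ℂ) (i : Fin (n + 1)) :
    phi0 a b ![a i, - b i] = Pi.single i (a i * b i *
      ∏ j ∈ Finset.univ.erase i, (b j * a i - a j * b i)) := by
  ext k
  by_cases hk : k = i
  · subst hk
    simp [phi0, sub_eq_add_neg]
  · rw [Pi.single_eq_of_ne hk, phi0, Finset.prod_eq_zero (i := i)]
    · simp
    · simp [Ne.symm hk]
    · simp; ring

lemma phi0_left {n : ℕ} (a b : Fin (n + 1) → ℂ) :
    phi0 a b ![1, 0] = (∏ j, b j) • a := by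
  ext k
  simp [phi0]
  rw [← Finset.mul_prod_erase Finset.univ b (Finset.mem_univ k)]
  ring

lemma phi0_right {n : ℕ} (a b : Fin (n + 1) → ℂ) :
    phi0 a b ![0, 1] = (∏ j, a j) • b := by
  ext k
  simp [phi0]
  rw [← Finset.mul_prod_erase Finset.univ a (Finset.mem_univ k)]
  ring

lemma root_ne {n : ℕ} (a b : Fin (n + 1) → ℂ) (ha : ∀ i, a i ≠ 0) (hb : ∀ i, b i ≠ 0)
    (hab : ∀ i j, i ≠ j → a i * b j - a j * b i ≠ 0) (i : Fin (n + 1)) :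
    (a i * b i * ∏ j ∈ Finset.univ.erase i, (b j * a i - a j * b i)) ≠ 0 := by
  refine mul_ne_zero (mul_ne_zero (ha i) (hb i)) (Finset.prod_ne_zero_iff.2 fun j hj => ?_)
  have := hab i j (Finset.ne_of_mem_erase hj).symm
  rwa [mul_comm (b j)]

lemma phi0_rnc {n : ℕ} (A : Matrix (Fin (n + 1)) (Fin (n + 1)) ℂ) (hA : IsUnit A.det)
    (a b : Fin (n + 1) → ℂ) (ha : ∀ i, a i ≠ 0) (hb : ∀ i, b i ≠ 0)
    (hab : ∀ i j, i ≠ j → a i * b j - a j * b i ≠ 0) :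
    ∃ M : Matrix (Fin (n + 1)) (Fin (n + 1)) ℂ, IsUnit M.det ∧
      ∀ v, M.mulVec (veron n v) = A.mulVec (phi0 a b v) := by
  have h1 : ∀ i : Fin (n + 1), ∃ m : Fin (n + 1) → ℂ, ∀ v : Fin 2 → ℂ,
      ∏ j ∈ Finset.univ.erase i, (b j * v 0 + a j * v 1) = ∑ k, m k * veron n v k :=
    fun i => form_exists n _ (by simp) _ _
  choose m hm using h1
  let X : Matrix (Fin (n + 1)) (Fin (n + 1)) ℂ := Matrix.of fun i k => a i * b i * m i k
  have hX : ∀ v, X.mulVec (veron n v) = phi0 a b v := by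
    intro v
    ext i
    simp only [X, phi0, hm, Matrix.mulVec, dotProduct, Matrix.of_apply, Finset.mul_sum, mul_assoc]
  refine ⟨A * X, ?_, fun v => by rw [← Matrix.mulVec_mulVec, hX]⟩
  rw [Matrix.det_mul]
  refine hA.mul ?_
  let V : Matrix (Fin (n + 1)) (Fin (n + 1)) ℂ := Matrix.of fun k i => veron n ![a i, - b i] k
  have hXV : X * V = Matrix.diagonal fun i => (a i * b i *
      ∏ j ∈ Finset.univ.erase i, (b j * a i - a j * b i)) := by
    ext k i
    have := congrFun (hX ![a i, - b i]) k
    rw [phi0_root] at this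
    rw [Matrix.diagonal_apply, Matrix.mul_apply]
    simp only [Matrix.mulVec, dotProduct] at this
    simp only [V, Matrix.of_apply]
    rw [this, Pi.single_apply]
    split_ifs with h
    · rw [h]
    · rfl
  have hd := congrArg Matrix.det hXV
  rw [Matrix.det_mul, Matrix.det_diagonal] at hd
  rw [isUnit_iff_ne_zero]
  intro h0
  rw [h0, zero_mul] at hd
  exact Finset.prod_ne_zero_iff.2 (fun i _ => root_ne a b ha hb hab i) hd.symm

lemma rnc_unique {n : ℕ} (X : Matrix (Fin (n + 1)) (Fin (n + 1)) ℂ)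
    (a b : Fin (n + 1) → ℂ) (ha : ∀ i, a i ≠ 0) (hb : ∀ i, b i ≠ 0)
    (p : Fin (n + 1) → Fin 2 → ℂ) (q r : Fin 2 → ℂ)
    (hp : ∀ i j, i ≠ j → p i 0 * p j 1 - p j 0 * p i 1 ≠ 0)
    (hq : ∀ i, p i 0 * q 1 - q 0 * p i 1 ≠ 0)
    (hr : ∀ i, p i 0 * r 1 - r 0 * p i 1 ≠ 0)
    (d : Fin (n + 1) → ℂ) (e f : ℂ) (hd : ∀ i, d i ≠ 0) (he : e ≠ 0) (hf : f ≠ 0)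
    (hXp : ∀ i, X.mulVec (veron n (p i)) = Pi.single i (d i))
    (hXq : X.mulVec (veron n q) = e • a)
    (hXr : X.mulVec (veron n r) = f • b) :
    ∃ K α β : ℂ, K ≠ 0 ∧ α ≠ 0 ∧ β ≠ 0 ∧ ∀ s t : ℂ,
      X.mulVec (veron n ((s * α) • q + (t * β) • r)) = K • phi0 a b ![s, t] := by
  have h1 : ∀ i : Fin (n + 1), ∃ m : Fin (n + 1) → ℂ, ∀ v : Fin 2 → ℂ,
      ∏ j ∈ Finset.univ.erase i, (- p j 1 * v 0 + p j 0 * v 1) = ∑ k, m k * veron n v k :=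
    fun i => form_exists n _ (by simp) _ _
  choose m hm using h1
  have hl : ∀ i, ∏ j ∈ Finset.univ.erase i, (- p j 1 * p i 0 + p j 0 * p i 1) ≠ 0 := by
    intro i
    refine Finset.prod_ne_zero_iff.2 fun j hj => ?_
    have := hp j i (Finset.ne_of_mem_erase hj)
    contrapose! this
    rw [← this]; ring
  let c : Fin (n + 1) → ℂ := fun i =>
    d i / ∏ j ∈ Finset.univ.erase i, (- p j 1 * p i 0 + p j 0 * p i 1)
  have hc : ∀ i, c i ≠ 0 := fun i => div_ne_zero (hd i) (hl i)
  have hX : ∀ v i, X.mulVec (veron n v) i =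
      c i * ∏ j ∈ Finset.univ.erase i, (- p j 1 * v 0 + p j 0 * v 1) := by
    intro v i
    have : X i = fun k => c i * m i k := by
      refine form_unique p hp _ _ fun k => ?_
      have h2 := congrFun (hXp k) i
      simp only [Matrix.mulVec, dotProduct] at h2
      simp only [mul_assoc]
      rw [← Finset.mul_sum, ← hm, h2]
      by_cases hk : k = i
      · subst hk
        rw [Pi.single_eq_same, div_mul_cancel₀ _ (hl k)]
      · rw [Pi.single_eq_of_ne (Ne.symm hk), Finset.prod_eq_zero (i := k)]
        · simp
        · simp [hk]
        · ring
    simp only [Matrix.mulVec, dotProduct, this, hm, Finset.mul_sum, mul_assoc]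
  have hq' : ∀ i, - p i 1 * q 0 + p i 0 * q 1 ≠ 0 := fun i => by
    have := hq i
    contrapose! this
    rw [← this]; ring
  have hr' : ∀ i, - p i 1 * r 0 + p i 0 * r 1 ≠ 0 := fun i => by
    have := hr i
    contrapose! this
    rw [← this]; ring
  set Lq : ℂ := ∏ i, (- p i 1 * q 0 + p i 0 * q 1) with hLq
  set Lr : ℂ := ∏ i, (- p i 1 * r 0 + p i 0 * r 1) with hLr
  have hLq0 : Lq ≠ 0 := Finset.prod_ne_zero_iff.2 fun i _ => hq' i
  have hLr0 : Lr ≠ 0 := Finset.prod_ne_zero_iff.2 fun i _ => hr' i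
  have hcq : ∀ i, c i * Lq = e * a i * (- p i 1 * q 0 + p i 0 * q 1) := by
    intro i
    have h2 := hX q i
    rw [hXq, Pi.smul_apply, smul_eq_mul] at h2
    rw [h2, hLq, ← Finset.mul_prod_erase Finset.univ _ (Finset.mem_univ i)]
    ring
  have hcr : ∀ i, c i * Lr = f * b i * (- p i 1 * r 0 + p i 0 * r 1) := by
    intro i
    have h2 := hX r i
    rw [hXr, Pi.smul_apply, smul_eq_mul] at h2
    rw [h2, hLr, ← Finset.mul_prod_erase Finset.univ _ (Finset.mem_univ i)]
    ring
  have hab0 : ∀ i, a i * b i ≠ 0 := fun i => mul_ne_zero (ha i) (hb i)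
  refine ⟨∏ i, (c i / (a i * b i)), e / Lq, f / Lr,
    Finset.prod_ne_zero_iff.2 fun i _ => div_ne_zero (hc i) (hab0 i),
    div_ne_zero he hLq0, div_ne_zero hf hLr0, fun s t => ?_⟩
  ext i
  rw [hX, Pi.smul_apply, smul_eq_mul, phi0,
    ← Finset.mul_prod_erase Finset.univ _ (Finset.mem_univ i)]
  have h3 : ∀ j, (- p j 1 * ((s * (e / Lq)) • q + (t * (f / Lr)) • r) 0 +
      p j 0 * ((s * (e / Lq)) • q + (t * (f / Lr)) • r) 1) =
      c j / (a j * b j) * (b j * (![s, t] : Fin 2 → ℂ) 0 + a j * (![s, t] : Fin 2 → ℂ) 1) := by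
    intro j
    have e1 : - p j 1 * q 0 + p j 0 * q 1 = c j * Lq / (e * a j) := by
      rw [hcq, mul_div_cancel_left₀ _ (mul_ne_zero he (ha j))]
    have e2 : - p j 1 * r 0 + p j 0 * r 1 = c j * Lr / (f * b j) := by
      rw [hcr, mul_div_cancel_left₀ _ (mul_ne_zero hf (hb j))]
    have e3 : (- p j 1 * ((s * (e / Lq)) • q + (t * (f / Lr)) • r) 0 +
      p j 0 * ((s * (e / Lq)) • q + (t * (f / Lr)) • r) 1) =
      s * (e / Lq) * (- p j 1 * q 0 + p j 0 * q 1) +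
        t * (f / Lr) * (- p j 1 * r 0 + p j 0 * r 1) := by
      simp only [Pi.add_apply, Pi.smul_apply, smul_eq_mul]; ring
    have := ha j
    have := hb j
    rw [e3, e1, e2]
    simp only [Matrix.cons_val_zero, Matrix.cons_val_one]
    field_simp
  rw [Finset.prod_congr rfl fun j _ => h3 j, Finset.prod_mul_distrib]
  have := ha i
  have := hb i
  field_simp
  congr 1
  exact Finset.prod_congr rfl fun j _ => by ring

lemma genpos_zero {n : ℕ} {Q : Fin (n + 3) → PP n} (hQ : InGenPos Q) (g : Fin (n + 3) → ℂ)
    (hg : ∑ i, g i • (Q i).rep = 0) (i j : Fin (n + 3)) (hij : i ≠ j) (hi : g i = 0)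
    (hj : g j = 0) (k : Fin (n + 3)) : g k = 0 := by
  have hcard : ((Finset.univ.erase i).erase j).card = n + 1 := by
    rw [Finset.card_erase_of_mem (by simp [hij.symm]), Finset.card_erase_of_mem (by simp)]
    simp
  have h := hQ ((Finset.univ.erase i).erase j) hcard.le
  rw [Fintype.linearIndependent_iff] at h
  have h2 := h (fun x => g x) (by
    rw [Finset.sum_coe_sort ((Finset.univ.erase i).erase j) (fun x => g x • (Q x).rep),
      Finset.sum_erase _ (by rw [hj, zero_smul]), Finset.sum_erase _ (by rw [hi, zero_smul]), hg])
  by_cases hk : k = i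
  · rw [hk, hi]
  by_cases hk' : k = j
  · rw [hk', hj]
  exact h2 ⟨k, by simp [hk, hk']⟩

lemma genpos_ne {n : ℕ} (hn : 2 ≤ n) {Q : Fin (n + 3) → PP n} (hQ : InGenPos Q)
    (i j : Fin (n + 3)) (hij : i ≠ j) (c : ℂ) : (Q i).rep ≠ c • (Q j).rep := by
  intro h
  have hc : 1 < (({i, j} : Finset (Fin (n + 3)))ᶜ).card := by
    rw [Finset.card_compl, Finset.card_pair hij, Fintype.card_fin]
    omega
  obtain ⟨k, hk, l, hl, hkl⟩ := Finset.one_lt_card.1 hc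
  simp only [Finset.mem_compl, Finset.mem_insert, Finset.mem_singleton, not_or] at hk hl
  have := genpos_zero hQ (Pi.single i 1 - Pi.single j c) (by
    simp [sub_smul, Pi.single_apply, ite_smul, h]) k l hkl
    (by simp [hk.1, hk.2]) (by simp [hl.1, hl.2]) i
  simp [hij] at this

lemma veron_smul (n : ℕ) (c : ℂ) (v : Fin 2 → ℂ) : veron n (c • v) = c ^ n • veron n v := by
  ext k
  have : c ^ n = c ^ (k : ℕ) * c ^ (n - (k : ℕ)) := by
    rw [← pow_add]; congr 1; have := k.2; omega
  simp only [veron, Pi.smul_apply, smul_eq_mul, this, mul_pow]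
  ring

lemma exists_smul_of_det (p q : Fin 2 → ℂ) (hq : q ≠ 0) (h : p 0 * q 1 - q 0 * p 1 = 0) :
    ∃ c : ℂ, p = c • q := by
  by_cases h0 : q 0 = 0
  · have h1 : q 1 ≠ 0 := by
      intro h1
      apply hq
      ext i
      fin_cases i <;> simp [h0, h1]
    refine ⟨p 1 / q 1, ?_⟩
    ext i
    fin_cases i
    · have : p 0 = 0 := by
        rw [h0, zero_mul, sub_zero] at h
        exact (mul_eq_zero.1 h).resolve_right h1
      simp [h0, this]
    · simp [h1]
  · refine ⟨p 0 / q 0, ?_⟩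
    ext i
    fin_cases i
    · simp [h0]
    · simp
      field_simp
      linear_combination -h

/-- Veronese's theorem: through `n+3` points of `ℙⁿ` (`n ≥ 2`) in linearly general
position there passes exactly one rational normal curve. -/
theorem veronese_theorem (n : ℕ) (hn : 2 ≤ n) (Q : Fin (n + 3) → PP n)
    (hQ : InGenPos Q) :
    ∃! C : Set (PP n), IsRNC n C ∧ ∀ i, Q i ∈ C := by
  classical
  let u : Fin (n + 1) → Fin (n + 3) := fun i => i.castSucc.castSucc
  let y : Fin (n + 3) := (Fin.last (n + 1)).castSucc
  let z : Fin (n + 3) := Fin.last (n + 2)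
  have huy : ∀ i, u i ≠ y := fun i h => by
    have := congrArg Fin.val h
    simp [u, y] at this
    have := i.2
    omega
  have huz : ∀ i, u i ≠ z := fun i h => by
    have := congrArg Fin.val h
    simp [u, z] at this
    have := i.2
    omega
  have hyz : y ≠ z := fun h => by
    have := congrArg Fin.val h
    simp [y, z] at this
  have huu : ∀ i j, i ≠ j → u i ≠ u j := fun i j h h' => h (by
    have := congrArg Fin.val h'
    simp [u] at this
    exact Fin.ext this)
  have hall : ∀ k : Fin (n + 3), (∃ i, k = u i) ∨ k = y ∨ k = z := by
    intro k
    refine Fin.lastCases (Or.inr (Or.inr rfl)) (fun k => ?_) k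
    refine Fin.lastCases (Or.inr (Or.inl rfl)) (fun k => Or.inl ⟨k, rfl⟩) k
  -- the relation principle in split form
  have key : ∀ (g : Fin (n + 1) → ℂ) (α β : ℂ),
      ∑ i, g i • (Q (u i)).rep + α • (Q y).rep + β • (Q z).rep = 0 →
      ∃ G : Fin (n + 3) → ℂ, (∀ i, G (u i) = g i) ∧ G y = α ∧ G z = β ∧
        ∑ i, G i • (Q i).rep = 0 := by
    intro g α β h
    refine ⟨Fin.snoc (Fin.snoc g α : Fin (n + 2) → ℂ) β, ?_, ?_, ?_, ?_⟩
    · intro i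
      simp [u]
    · simp [y]
    · simp [z]
    · rw [Fin.sum_univ_castSucc, Fin.sum_univ_castSucc]
      simpa [u, y, z] using h
  let A : Matrix (Fin (n + 1)) (Fin (n + 1)) ℂ := Matrix.of fun r i => (Q (u i)).rep r
  have hAm : ∀ x, A.mulVec x = ∑ i, x i • (Q (u i)).rep := by
    intro x
    ext r
    simp [A, Matrix.mulVec, dotProduct, Finset.sum_apply, mul_comm]
  have hA : IsUnit A.det := by
    rw [isUnit_iff_ne_zero]
    intro h0
    obtain ⟨x, hx, hx0⟩ := Matrix.exists_mulVec_eq_zero_iff.2 h0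
    apply hx
    rw [hAm] at hx0
    obtain ⟨G, hG, hy, hz, hs⟩ := key x 0 0 (by simp [hx0])
    ext i
    rw [← hG]
    exact genpos_zero hQ G hs y z hyz hy hz _
  have hAinj : ∀ x x', A.mulVec x = A.mulVec x' → x = x' := fun x x' h =>
    Matrix.mulVec_injective_of_isUnit ((Matrix.isUnit_iff_isUnit_det A).2 hA) h
  have hAsurj : ∀ w, A.mulVec (A⁻¹.mulVec w) = w := fun w => by
    rw [Matrix.mulVec_mulVec, Matrix.mul_nonsing_inv _ hA, Matrix.one_mulVec]
  obtain ⟨a, hay⟩ : ∃ a, A.mulVec a = (Q y).rep := ⟨_, hAsurj _⟩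
  obtain ⟨b, hbz⟩ : ∃ b, A.mulVec b = (Q z).rep := ⟨_, hAsurj _⟩
  have hAu : ∀ i c, A.mulVec (Pi.single i c) = c • (Q (u i)).rep := by
    intro i c
    rw [hAm, Finset.sum_eq_single i]
    · simp
    · intro j _ hj
      simp [hj]
    · simp
  have ha : ∀ i, a i ≠ 0 := by
    intro i hi
    obtain ⟨G, hG, hy, hz, hs⟩ := key a (-1) 0 (by rw [← hAm, hay]; simp)
    have := genpos_zero hQ G hs (u i) z (huz i) (by rw [hG, hi]) hz y
    rw [hy] at this
    simp at this
  have hb : ∀ i, b i ≠ 0 := by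
    intro i hi
    obtain ⟨G, hG, hy, hz, hs⟩ := key b 0 (-1) (by rw [← hAm, hbz]; simp)
    have := genpos_zero hQ G hs (u i) y (huy i) (by rw [hG, hi]) hy z
    rw [hz] at this
    simp at this
  have hab : ∀ i j, i ≠ j → a i * b j - a j * b i ≠ 0 := by
    intro i j hij h0
    obtain ⟨G, hG, hy, hz, hs⟩ := key (b j • a - a j • b) (- b j) (a j) (by
      rw [← hAm, Matrix.mulVec_sub, Matrix.mulVec_smul, Matrix.mulVec_smul, hay, hbz, neg_smul]
      abel)
    have := genpos_zero hQ G hs (u i) (u j) (huu i j hij)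
      (by rw [hG]; simp; linear_combination h0) (by rw [hG]; simp; ring) y
    rw [hy] at this
    exact hb j (neg_eq_zero.1 this)
  obtain ⟨M0, hM0, hM0v⟩ := phi0_rnc A hA a b ha hb hab
  refine ⟨{P : PP n | ∃ v : Fin 2 → ℂ, v ≠ 0 ∧ ∃ c : ℂ, c ≠ 0 ∧
      P.rep = c • M0.mulVec (veron n v)}, ⟨⟨M0, hM0, rfl⟩, ?_⟩, ?_⟩
  · intro k
    simp only [Set.mem_ofPred_eq, hM0v]
    rcases hall k with ⟨i, rfl⟩ | rfl | rfl
    · refine ⟨![a i, - b i], ?_, (a i * b i *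
        ∏ j ∈ Finset.univ.erase i, (b j * a i - a j * b i))⁻¹,
        inv_ne_zero (root_ne a b ha hb hab i), ?_⟩
      · intro h
        exact ha i (by simpa using congrFun h 0)
      · rw [phi0_root, hAu, smul_smul, inv_mul_cancel₀ (root_ne a b ha hb hab i), one_smul]
    · have h0 : ∏ j, b j ≠ 0 := Finset.prod_ne_zero_iff.2 fun i _ => hb i
      refine ⟨![1, 0], ?_, (∏ j, b j)⁻¹, inv_ne_zero h0, ?_⟩
      · intro h
        simpa using congrFun h 0
      · rw [phi0_left, Matrix.mulVec_smul, smul_smul, inv_mul_cancel₀ h0, one_smul, hay]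
    · have h0 : ∏ j, a j ≠ 0 := Finset.prod_ne_zero_iff.2 fun i _ => ha i
      refine ⟨![0, 1], ?_, (∏ j, a j)⁻¹, inv_ne_zero h0, ?_⟩
      · intro h
        simpa using congrFun h 1
      · rw [phi0_right, Matrix.mulVec_smul, smul_smul, inv_mul_cancel₀ h0, one_smul, hbz]
  · rintro C ⟨⟨M, hM, rfl⟩, hC⟩
    choose p hp0 c hc hpc using hC
    have hpp : ∀ i j, i ≠ j → p i 0 * p j 1 - p j 0 * p i 1 ≠ 0 := by
      intro i j hij h0
      obtain ⟨t, ht⟩ := exists_smul_of_det _ _ (hp0 j) h0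
      apply genpos_ne hn hQ i j hij (c i * t ^ n * (c j)⁻¹)
      rw [hpc i, hpc j, ht, veron_smul, Matrix.mulVec_smul, smul_smul, smul_smul,
        inv_mul_cancel_right₀ (hc j)]
    have hMp : ∀ k, M.mulVec (veron n (p k)) = (c k)⁻¹ • (Q k).rep := by
      intro k
      rw [hpc k, smul_smul, inv_mul_cancel₀ (hc k), one_smul]
    have hAX : ∀ v, A.mulVec ((A⁻¹ * M).mulVec v) = M.mulVec v := by
      intro v
      rw [← Matrix.mulVec_mulVec, hAsurj]
    obtain ⟨K, α, β, hK, hα, hβ, hfin⟩ := rnc_unique (A⁻¹ * M) a b ha hb (fun i => p (u i))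
      (p y) (p z) (fun i j hij => hpp _ _ (huu i j hij)) (fun i => hpp _ _ (huy i))
      (fun i => hpp _ _ (huz i)) (fun i => (c (u i))⁻¹) (c y)⁻¹ (c z)⁻¹
      (fun i => inv_ne_zero (hc _)) (inv_ne_zero (hc _)) (inv_ne_zero (hc _))
      (fun i => hAinj _ _ (by rw [hAX, hMp, hAu]))
      (hAinj _ _ (by rw [hAX, hMp, Matrix.mulVec_smul, hay]))
      (hAinj _ _ (by rw [hAX, hMp, Matrix.mulVec_smul, hbz]))
    have hfin' : ∀ s t : ℂ, M.mulVec (veron n ((s * α) • p y + (t * β) • p z)) =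
        K • M0.mulVec (veron n ![s, t]) := by
      intro s t
      rw [← hAX, hfin, Matrix.mulVec_smul, hM0v]
    have hD := hpp y z hyz
    ext P
    simp only [Set.mem_ofPred_eq]
    constructor
    · rintro ⟨v, hv, e, he, hP⟩
      set D := p y 0 * p z 1 - p z 0 * p y 1 with hDdef
      have hv2 : v = (((v 0 * p z 1 - p z 0 * v 1) / D / α) * α) • p y +
          (((p y 0 * v 1 - v 0 * p y 1) / D / β) * β) • p z := by
        rw [div_mul_cancel₀ _ hα, div_mul_cancel₀ _ hβ]
        ext i
        fin_cases i
        · simp only [Pi.add_apply, Pi.smul_apply, smul_eq_mul, Fin.zero_eta]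
          field_simp
          rw [hDdef]; ring
        · simp only [Pi.add_apply, Pi.smul_apply, smul_eq_mul, Fin.mk_one]
          field_simp
          rw [hDdef]; ring
      refine ⟨![(v 0 * p z 1 - p z 0 * v 1) / D / α, (p y 0 * v 1 - v 0 * p y 1) / D / β], ?_,
        e * K, mul_ne_zero he hK, ?_⟩
      · intro h
        apply hv
        have e0 := congrFun h 0
        have e1 := congrFun h 1
        simp only [Matrix.cons_val_zero, Matrix.cons_val_one, Pi.zero_apply] at e0 e1
        rw [hv2, e0, e1]
        simp
      · rw [hP, mul_smul, ← hfin', ← hv2]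
    · rintro ⟨w, hw, e, he, hP⟩
      have hw2 : w = ![w 0, w 1] := by
        ext i
        fin_cases i <;> rfl
      refine ⟨(w 0 * α) • p y + (w 1 * β) • p z, ?_, e * K⁻¹, mul_ne_zero he (inv_ne_zero hK), ?_⟩
      · intro h
        have e0 := congrFun h 0
        have e1 := congrFun h 1
        simp only [Pi.add_apply, Pi.smul_apply, smul_eq_mul, Pi.zero_apply] at e0 e1
        have f0 : w 0 * α * (p y 0 * p z 1 - p z 0 * p y 1) = 0 := by
          linear_combination p z 1 * e0 - p z 0 * e1
        have f1 : w 1 * β * (p y 0 * p z 1 - p z 0 * p y 1) = 0 := by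
          linear_combination p y 0 * e1 - p y 1 * e0
        simp only [mul_eq_zero, hα, hβ, hD, or_false] at f0 f1
        apply hw
        rw [hw2, f0, f1]
        ext i
        fin_cases i <;> rfl
      · rw [hP, hfin', ← hw2, smul_smul, inv_mul_cancel_right₀ hK]

end
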